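/- Fix 0 ≤ ε < 1, η ∈ (0,1), a finite input alphabet X, and natural numbers k ≥ s ≥ 0 with η^{2s} ≥ 1 − ε. Then there exists a partition of X^k with exactly |X|^{k−s} blocks that is an ε-reverse compression of the k-fold erasure channel P_η^k, i.e., every pair of sequences x^k, x̂^k in the same block satisfies F(P_η^k(·|x^k), P_η^k(·|x̂^k)) ≥ 1 − ε. Consequently the compressibility of k uses satisfies Γ_ε^{(k)} ≥ (|X|^k − |X|^{k−s})/(|X|^k − 1) for |X|^k ≥ 2, and the asymptotic compressibility satisfies Δ_ε ≥ 1 − |X|^{−s}. -/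

import Mathlib

open scoped BigOperators

/-- The classical fidelity of two probability distributions on a finite set. -/
noncomputable def fidelity {Y : Type*} [Fintype Y] (p q : Y → ℝ) : ℝ :=
  (∑ y, Real.sqrt (p y * q y)) ^ 2

/-- The classical erasure channel with parameter `η` on input alphabet `X`;
`none` plays the role of the erasure symbol. -/
noncomputable def erasureChannel {X : Type*} [DecidableEq X] (η : ℝ) (x : X) :
    Option X → ℝ
  | some x' => if x' = x then 1 - η else 0
  | none => η

/-- The output distribution of `k` independent (memoryless, feedback-free)
uses of the erasure channel on the input sequence `x`. -/
noncomputable def erasureChannelK {X : Type*} [DecidableEq X] (η : ℝ) (k : ℕ)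
    (x : Fin k → X) : (Fin k → Option X) → ℝ :=
  fun y => ∏ i, erasureChannel η (x i) (y i)

/-- A partition of `X^k` is an ε-reverse compression of the `k`-fold erasure
channel `P_η^k` if every pair of sequences in the same block has output
fidelity at least `1 − ε`. -/
def IsReverseCompression (X : Type) [Fintype X] [DecidableEq X] (ε η : ℝ) (k : ℕ)
    (P : Set (Set (Fin k → X))) : Prop :=
  Setoid.IsPartition P ∧
    ∀ A ∈ P, ∀ x ∈ A, ∀ x' ∈ A,
      fidelity (erasureChannelK η k x) (erasureChannelK η k x') ≥ 1 - ε

/-- The compressibility `Γ_ε^{(k)}` of `k` uses of the erasure channel: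
the supremum of `(|X^k| − |P|)/(|X^k| − 1)` over all ε-reverse compressions
`P` of `P_η^k`. -/
noncomputable def compressibility (X : Type) [Fintype X] [DecidableEq X]
    (ε η : ℝ) (k : ℕ) : ℝ :=
  sSup { g : ℝ | ∃ P : Set (Set (Fin k → X)), IsReverseCompression X ε η k P ∧
    g = ((Fintype.card X : ℝ) ^ k - P.ncard) / ((Fintype.card X : ℝ) ^ k - 1) }

/-!
Fidelity is multiplicative on product distributions, and the erasure symbol is the only output that
two distinct letters share, so `F(P_η^k(·|x), P_η^k(·|x'))` equals `η` to the power `2 d(x, x')`,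
with `d` the Hamming distance. Grouping the sequences by their first `k - s` letters gives blocks of
Hamming diameter at most `s`, one for each word of length `k - s`.
-/

lemma fidelity_self {Y : Type*} [Fintype Y] {p : Y → ℝ} (hp : ∀ y, 0 ≤ p y) :
    fidelity p p = (∑ y, p y) ^ 2 := by
  simp only [fidelity, Real.sqrt_mul_self (hp _)]

lemma fidelity_pi {ι : Type*} [Fintype ι] [DecidableEq ι] {Y : ι → Type*} [∀ i, Fintype (Y i)]
    {p q : ∀ i, Y i → ℝ} (hp : ∀ i y, 0 ≤ p i y) (hq : ∀ i y, 0 ≤ q i y) :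
    fidelity (fun y : ∀ i, Y i => ∏ i, p i (y i)) (fun y => ∏ i, q i (y i)) =
      ∏ i, fidelity (p i) (q i) := by
  simp only [fidelity, Finset.prod_pow, Finset.prod_univ_sum, Fintype.piFinset_univ]
  congr! 2 with y
  rw [← Finset.prod_mul_distrib, Real.sqrt_prod _ fun i _ => mul_nonneg (hp i _) (hq i _)]

section ErasureChannel

variable {X : Type*} [DecidableEq X] {η : ℝ}

lemma erasureChannel_nonneg (hη : η ∈ Set.Icc (0 : ℝ) 1) (x : X) (y : Option X) :
    0 ≤ erasureChannel η x y := by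
  cases y with
  | none => exact hη.1
  | some z =>
    rw [erasureChannel]
    split_ifs
    exacts [sub_nonneg.2 hη.2, le_rfl]

variable [Fintype X]

lemma sum_erasureChannel (η : ℝ) (x : X) : ∑ y, erasureChannel η x y = 1 := by
  simp [Fintype.sum_option, erasureChannel]

lemma fidelity_erasureChannel_of_ne (η : ℝ) {x x' : X} (hx : x ≠ x') :
    fidelity (erasureChannel η x) (erasureChannel η x') = η ^ 2 := by
  have disjoint_supports (z : X) :
      erasureChannel η x (some z) * erasureChannel η x' (some z) = 0 := by
    simp only [erasureChannel]
    grind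
  rw [fidelity, Fintype.sum_option]
  simp only [disjoint_supports, Real.sqrt_zero, Finset.sum_const_zero, add_zero]
  simp only [erasureChannel, Real.sqrt_mul_self_eq_abs, sq_abs]

lemma fidelity_erasureChannelK (hη : η ∈ Set.Icc (0 : ℝ) 1) {k : ℕ} (x x' : Fin k → X) :
    fidelity (erasureChannelK η k x) (erasureChannelK η k x') = η ^ (2 * hammingDist x x') := by
  have fidelity_letter (i : Fin k) :
      fidelity (erasureChannel η (x i)) (erasureChannel η (x' i)) =
        if x i ≠ x' i then η ^ 2 else 1 := by
    split_ifs with hi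
    · exact fidelity_erasureChannel_of_ne η hi
    · rw [not_not.1 hi, fidelity_self (erasureChannel_nonneg hη _), sum_erasureChannel, one_pow]
  calc fidelity (erasureChannelK η k x) (erasureChannelK η k x')
      = ∏ i, fidelity (erasureChannel η (x i)) (erasureChannel η (x' i)) :=
        fidelity_pi (fun _ => erasureChannel_nonneg hη _) (fun _ => erasureChannel_nonneg hη _)
    _ = ∏ i with x i ≠ x' i, η ^ 2 := by simp only [fidelity_letter, Finset.prod_filter]
    _ = η ^ (2 * hammingDist x x') := by rw [Finset.prod_const, ← pow_mul, hammingDist]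

end ErasureChannel

lemma ncard_classes_ker {α β : Type*} {f : α → β} (hf : f.Surjective) :
    (Setoid.ker f).classes.ncard = Nat.card β := by
  rw [← Nat.card_coe_set_eq, ← Nat.card_congr (Setoid.quotientEquivClasses (Setoid.ker f)),
    Nat.card_congr (Setoid.quotientKerEquivOfSurjective f hf)]

lemma hammingDist_add_card_le_of_comp_eq {ι κ X : Type*} [Fintype ι] [Fintype κ] [DecidableEq X]
    {e : ι → κ} (he : e.Injective) {x x' : κ → X} (h : x ∘ e = x' ∘ e) :
    hammingDist x x' + Fintype.card ι ≤ Fintype.card κ := by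
  have card_le_agreements : Fintype.card ι ≤ Finset.card {j | ¬ x j ≠ x' j} :=
    Finset.card_le_card_of_injOn e (fun i _ => by simpa using congrFun h i) he.injOn
  have := Finset.card_filter_add_card_filter_not (s := Finset.univ) fun j => x j ≠ x' j
  rw [Finset.card_univ] at this
  rw [hammingDist]
  omega

section ReverseCompression

variable {X : Type} [Fintype X] [DecidableEq X] {ε η : ℝ} {k s : ℕ}

lemma isReverseCompression_classes (hη : η ∈ Set.Icc (0 : ℝ) 1) (hfid : 1 - ε ≤ η ^ (2 * s))
    {r : Setoid (Fin k → X)} (hr : ∀ x x', r x x' → hammingDist x x' ≤ s) :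
    IsReverseCompression X ε η k r.classes := by
  refine ⟨Setoid.isPartition_classes r, fun A hA x hx x' hx' => ?_⟩
  have hdist : hammingDist x x' ≤ s := hr x x' (r.rel_iff_exists_classes.2 ⟨A, hA, hx, hx'⟩)
  calc 1 - ε ≤ η ^ (2 * s) := hfid
    _ ≤ η ^ (2 * hammingDist x x') := pow_le_pow_of_le_one hη.1 hη.2 (by gcongr)
    _ = _ := (fidelity_erasureChannelK hη x x').symm

lemma exists_isReverseCompression_ncard_eq [Nonempty X] (hη : η ∈ Set.Icc (0 : ℝ) 1)
    (hsk : s ≤ k) (hfid : 1 - ε ≤ η ^ (2 * s)) :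
    ∃ P : Set (Set (Fin k → X)),
      IsReverseCompression X ε η k P ∧ P.ncard = Fintype.card X ^ (k - s) := by
  let pre : (Fin k → X) → Fin (k - s) → X := (· ∘ Fin.castLE (k.sub_le s))
  have pre_surjective : pre.Surjective := (Fin.castLE_injective _).surjective_comp_right
  refine ⟨(Setoid.ker pre).classes, isReverseCompression_classes hη hfid fun x x' h => ?_, ?_⟩
  · have := hammingDist_add_card_le_of_comp_eq (Fin.castLE_injective _) h
    simp only [Fintype.card_fin] at this
    omega
  · simp [ncard_classes_ker pre_surjective]

lemma IsReverseCompression.le_compressibility {P : Set (Set (Fin k → X))}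
    (hP : IsReverseCompression X ε η k P) :
    ((Fintype.card X : ℝ) ^ k - P.ncard) / ((Fintype.card X : ℝ) ^ k - 1) ≤
      compressibility X ε η k := by
  refine le_csSup (Set.Finite.bddAbove ?_) ⟨P, hP, rfl⟩
  refine (Set.finite_range fun Q : Set (Set (Fin k → X)) =>
    ((Fintype.card X : ℝ) ^ k - Q.ncard) / ((Fintype.card X : ℝ) ^ k - 1)).subset ?_
  rintro _ ⟨Q, -, rfl⟩
  exact ⟨Q, rfl⟩

lemma card_pow_sub_div_le_compressibility [Nonempty X] (hη : η ∈ Set.Icc (0 : ℝ) 1) (hsk : s ≤ k)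
    (hfid : 1 - ε ≤ η ^ (2 * s)) :
    ((Fintype.card X : ℝ) ^ k - (Fintype.card X : ℝ) ^ (k - s)) /
      ((Fintype.card X : ℝ) ^ k - 1) ≤ compressibility X ε η k := by
  obtain ⟨P, hP, hcard⟩ := exists_isReverseCompression_ncard_eq (X := X) hη hsk hfid
  simpa [hcard] using hP.le_compressibility

end ReverseCompression

-- When `n ^ k = 1`, both sides are `0`, the right one as the junk value of `0 / 0`.
lemma one_sub_zpow_neg_le_div {n : ℝ} (hn : 1 ≤ n) {k s : ℕ} (hsk : s ≤ k) :
    1 - n ^ (-(s : ℤ)) ≤ (n ^ k - n ^ (k - s)) / (n ^ k - 1) := by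
  rw [zpow_neg, zpow_natCast, pow_sub₀ n (by positivity) hsk]
  have hs : 1 ≤ n ^ s := one_le_pow₀ hn
  have hle : n ^ s ≤ n ^ k := pow_le_pow_right₀ hn hsk
  rcases (hs.trans hle).eq_or_lt with hk | hk
  · simp [← hk, le_antisymm (hle.trans_eq hk.symm) hs]
  · have hinv : (n ^ s)⁻¹ ≤ 1 := inv_le_one_of_one_le₀ hs
    rw [le_div_iff₀ (sub_pos.2 hk)]
    linarith

/-- Fix `0 ≤ ε < 1`, `η ∈ (0,1)`, a finite alphabet `X`, and
`k ≥ s ≥ 0` with `η^(2s) ≥ 1 − ε`. Then there is a partition of `X^k` with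
exactly `|X|^(k−s)` blocks which is an ε-reverse compression of the `k`-fold
erasure channel. Consequently `Γ_ε^{(k)} ≥ (|X|^k − |X|^(k−s))/(|X|^k − 1)`
when `|X|^k ≥ 2`, and the asymptotic compressibility `Δ_ε = lim_k Γ_ε^{(k)}`
satisfies `Δ_ε ≥ 1 − |X|^(−s)`. -/
theorem erasure_reverse_compression_bounds {X : Type} [Fintype X] [DecidableEq X]
    (hX : 1 ≤ Fintype.card X) (ε η : ℝ) (hε : 0 ≤ ε) (hε1 : ε < 1)
    (hη : η ∈ Set.Ioo (0 : ℝ) 1) (k s : ℕ) (hsk : s ≤ k)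
    (hfid : η ^ (2 * s) ≥ 1 - ε) :
    (∃ P : Set (Set (Fin k → X)), IsReverseCompression X ε η k P ∧
      P.ncard = Fintype.card X ^ (k - s)) ∧
    (2 ≤ Fintype.card X ^ k →
      compressibility X ε η k ≥
        ((Fintype.card X : ℝ) ^ k - (Fintype.card X : ℝ) ^ (k - s)) /
          ((Fintype.card X : ℝ) ^ k - 1)) ∧
    (∀ Δ : ℝ,
      Filter.Tendsto (fun m : ℕ => compressibility X ε η m) Filter.atTop (nhds Δ) →
      Δ ≥ 1 - (Fintype.card X : ℝ) ^ (-(s : ℤ))) := by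
  have : Nonempty X := Fintype.card_pos_iff.1 hX
  have hη' : η ∈ Set.Icc (0 : ℝ) 1 := Set.Ioo_subset_Icc_self hη
  refine ⟨exists_isReverseCompression_ncard_eq hη' hsk hfid,
    fun _ => card_pow_sub_div_le_compressibility hη' hsk hfid, fun Δ hΔ => ge_of_tendsto hΔ ?_⟩
  filter_upwards [Filter.eventually_ge_atTop s] with m hm
  exact (one_sub_zpow_neg_le_div (Nat.one_le_cast.2 hX) hm).trans
    (card_pow_sub_div_le_compressibility hη' hm hfid)
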